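/- arXiv:1808.05435 — 2 statements merged into one kernel-verified Lean document; each statement's English description precedes it below -/
import Mathlib

section
/- Let A be a complex semisimple unital Banach algebra with Soc A ≠ {0}. Then A is prime if and only if Soc A is a minimal two-sided ideal and the left annihilator l(Soc A) equals {0}. -/
open Complex

noncomputable section

/-- The nonzero spectrum `σ'(x) = σ(x) \ {0}` of an element of a complex algebra. -/
def nzSpec {A : Type*} [Ring A] [Algebra ℂ A] (x : A) : Set ℂ :=
  spectrum ℂ x \ {0}

/-- The spectral rank of an element: `rank a = sup_{x ∈ A} #σ'(xa)`, valued in `ℕ∞`. -/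
noncomputable def srank {A : Type*} [Ring A] [Algebra ℂ A] (a : A) : ℕ∞ :=
  ⨆ x : A, (nzSpec (x * a)).encard

/-- The socle of `A`: the set of finite-rank elements. -/
def socle (A : Type*) [Ring A] [Algebra ℂ A] : Set A :=
  {a : A | srank a ≠ ⊤}

/-- `A` is (Jacobson) semisimple: its Jacobson radical is `{0}`. -/
def JacobsonSemisimple (A : Type*) [Ring A] : Prop :=
  TwoSidedIdeal.jacobson (⊥ : TwoSidedIdeal A) = ⊥

/-- `Soc A` is a minimal two-sided ideal: it is a nonzero two-sided ideal containing
no two-sided ideals other than `{0}` and itself. -/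
def SocleIsMinimalTwoSidedIdeal (A : Type*) [Ring A] [Algebra ℂ A] : Prop :=
  ∃ I : TwoSidedIdeal A, (I : Set A) = socle A ∧ I ≠ ⊥ ∧
    ∀ J : TwoSidedIdeal A, J ≤ I → J = ⊥ ∨ J = I

/-- `A` is a prime algebra: all nonzero two-sided ideals `I, J` satisfy `IJ ≠ {0}`. -/
def IsPrimeAlgebra (A : Type*) [Ring A] : Prop :=
  ∀ I J : TwoSidedIdeal A, I ≠ ⊥ → J ≠ ⊥ → ∃ x ∈ I, ∃ y ∈ J, x * y ≠ 0

/-- The left annihilator of the socle equals `{0}`. -/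
def LeftAnnSocleTrivial (A : Type*) [Ring A] [Algebra ℂ A] : Prop :=
  {x : A | ∀ y ∈ socle A, x * y = 0} = {0}

/-!
The rank of `a` is the length of the left module `Aa`. On the one hand, if `Ab` has finite length,
every nonzero `μ ∈ σ(b)` is an eigenvalue of right multiplication by `b` on `Ab`, and the
eigenspaces are independent left submodules. On the other hand, the maximal left ideals intersect
in `0`, so `Aa` can be cut down by them one unit of length at a time; prescribing the residue of an
element of `Aa` modulo each of them yields as many spectral values as the length allows.

So `Soc A` is the two-sided ideal of those `a` for which `Aa` has finite length, and such an `Aa`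
is a semisimple module. If `A` is prime and `J ≠ 0`, then a complement `C` of `Aa ∩ J` in `Aa`
satisfies `JC ⊆ J ∩ C = 0`, hence vanishes; so `Soc A ⊆ J`. Conversely, a minimal ideal with zero
left annihilator lies in every nonzero ideal, and then no product of nonzero ideals can vanish.
-/

section Length

variable {R M : Type*} [Ring R] [AddCommGroup M] [Module R M]

theorem enatCard_le_length_of_iSupIndep {ι : Type*} {p : ι → Submodule R M} (hp : iSupIndep p)
    (hne : ∀ i, p i ≠ ⊥) : ENat.card ι ≤ Module.length R M := by
  classical
  by_cases hM : Module.length R M = ⊤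
  · simp [hM]
  have := (isFiniteLength_iff_isNoetherian_isArtinian.1 (Module.length_ne_top_iff.1 hM)).1
  have := WellFoundedGT.finite_of_iSupIndep hp hne
  have := Fintype.ofFinite ι
  have hsum : Function.Injective
      (DFinsupp.lsum ℕ (fun i ↦ (p i).subtype) ∘ₗ
        (DFinsupp.linearEquivFunOnFintype (R := R) (M := fun i ↦ p i)).symm.toLinearMap) :=
    hp.dfinsupp_lsum_injective.comp
      (DFinsupp.linearEquivFunOnFintype (R := R) (M := fun i ↦ p i)).symm.injective
  calc ENat.card ι = ∑ _i : ι, (1 : ℕ∞) := by simp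
    _ ≤ ∑ i, Module.length R (p i) := Finset.sum_le_sum fun i _ ↦ by
        have : Nontrivial (p i) := Submodule.nontrivial_iff_ne_bot.2 (hne i)
        exact Order.one_le_iff_pos.2 Module.length_pos
    _ = Module.length R (Π i, p i) := (Module.length_pi_of_fintype R fun i ↦ p i).symm
    _ ≤ Module.length R M := Module.length_le_of_injective _ hsum

theorem length_eq_length_inf_add_one {P Q : Submodule R M} (hQ : IsCoatom Q) (hPQ : ¬ P ≤ Q) :
    Module.length R P = Module.length R ↥(P ⊓ Q) + 1 := by
  have : IsSimpleModule R (M ⧸ Q) := isSimpleModule_iff_isCoatom.2 hQ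
  have hne : Q.mkQ ∘ₗ P.subtype ≠ 0 := by
    contrapose! hPQ
    simpa using (LinearMap.range_le_ker_iff (f := P.subtype) (g := Q.mkQ)).2 hPQ
  have hexact : Function.Exact (Submodule.inclusion (inf_le_left : P ⊓ Q ≤ P))
      (Q.mkQ ∘ₗ P.subtype) := by
    rw [LinearMap.exact_iff, Submodule.range_inclusion, LinearMap.ker_comp, Submodule.ker_mkQ]
    ext x
    simp
  rw [Module.length_eq_add_of_exact _ _ (Submodule.inclusion_injective _)
    (LinearMap.surjective_of_ne_zero hne) hexact, Module.length_eq_one R (M ⧸ Q)]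

theorem encard_eigenvalues_le_length {K A V : Type*} [Field K] [Ring A] [Algebra K A]
    [AddCommGroup V] [Module K V] [Module A V] [IsScalarTower K A V] (f : V →ₗ[A] V) :
    {μ : K | ∃ v ≠ 0, f v = μ • v}.encard ≤ Module.length A V := by
  have : SMulCommClass A K V := IsScalarTower.to_smulCommClass'
  let E (μ : {μ : K | ∃ v ≠ 0, f v = μ • v}) : Submodule A V :=
    LinearMap.ker (f - (μ : K) • LinearMap.id)
  have mem_E (μ) (v : V) : v ∈ E μ ↔ f v = (μ : K) • v := by simp [E, sub_eq_zero]
  have indep : iSupIndep E := by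
    have := (Module.End.eigenspaces_iSupIndep (f.restrictScalars K)).comp
      (Subtype.val_injective (p := (· ∈ {μ : K | ∃ v ≠ 0, f v = μ • v})))
    rw [iSupIndep_iff_finsetSum_eq_zero_imp_eq_zero] at this ⊢
    simpa only [mem_E, Function.comp_apply, Module.End.mem_eigenspace_iff,
      LinearMap.restrictScalars_apply] using this
  refine enatCard_le_length_of_iSupIndep indep fun μ ↦ ?_
  obtain ⟨v, hv, hfv⟩ := μ.2
  exact (Submodule.ne_bot_iff _).2 ⟨v, (mem_E μ v).2 hfv, hv⟩

end Length

section Spectrum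

variable {K A : Type*} [Field K] [Ring A] [Algebra K A]

theorem exists_mul_algebraMap_sub_eq_self {b : A} {μ : K} [IsArtinian A (Ideal.span {b})]
    (h : ∀ z : A, z * b = μ • z → z = 0) : ∃ z, z * (algebraMap K A μ - b) = b := by
  have hmaps (z : A) (hz : z ∈ Ideal.span {b}) :
      LinearMap.toSpanSingleton A A (algebraMap K A μ - b) z ∈ Ideal.span {b} := by
    rw [LinearMap.toSpanSingleton_apply, smul_eq_mul, mul_sub, ← Algebra.commutes]
    exact sub_mem (Ideal.mul_mem_left _ _ hz)
      (Ideal.mul_mem_left _ _ (Ideal.mem_span_singleton_self b))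
  have hinj : Function.Injective ((LinearMap.toSpanSingleton A A _).restrict hmaps) := by
    rw [injective_iff_map_eq_zero]
    rintro ⟨z, hz⟩ hzero
    have hz' : z * (algebraMap K A μ - b) = 0 := congrArg Subtype.val hzero
    rw [mul_sub, sub_eq_zero, ← Algebra.commutes, ← Algebra.smul_def] at hz'
    exact Subtype.ext (h z hz'.symm)
  obtain ⟨z, hz⟩ := IsArtinian.surjective_of_injective_endomorphism _ hinj
    ⟨b, Ideal.mem_span_singleton_self b⟩
  exact ⟨z, congrArg Subtype.val hz⟩

theorem exists_mul_eq_smul_of_mem_spectrum {b : A} {μ : K} [IsArtinian A (Ideal.span {b})]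
    (hμ : μ ∈ spectrum K b) (hμ0 : μ ≠ 0) : ∃ z ∈ Ideal.span {b}, z ≠ 0 ∧ z * b = μ • z := by
  by_contra! hcon
  apply hμ
  have eq_zero (z : A) (hz : z * b = μ • z) : z = 0 := by
    by_contra hz0
    refine hcon z (Ideal.mem_span_singleton'.2 ⟨μ⁻¹ • z, ?_⟩) hz0 hz
    rw [smul_mul_assoc, hz, inv_smul_smul₀ hμ0]
  obtain ⟨z, hz⟩ := exists_mul_algebraMap_sub_eq_self eq_zero
  have hleft : μ⁻¹ • (1 + z) * (algebraMap K A μ - b) = 1 := by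
    rw [smul_mul_assoc, add_mul, one_mul, hz, sub_add_cancel, Algebra.algebraMap_eq_smul_one,
      inv_smul_smul₀ hμ0]
  -- The defect of a left inverse from being a right inverse is again an eigenvector.
  have hright : (algebraMap K A μ - b) * μ⁻¹ • (1 + z) = 1 := by
    refine sub_eq_zero.1 (eq_zero _ (sub_eq_zero.1 ?_).symm)
    rw [Algebra.smul_def, Algebra.commutes, ← mul_sub, sub_mul, mul_assoc, hleft, one_mul, mul_one,
      sub_self]
  exact ⟨⟨_, _, hright, hleft⟩, rfl⟩

theorem encard_spectrum_diff_zero_le_length (b : A) :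
    (spectrum K b \ {0}).encard ≤ Module.length A (Ideal.span {b}) := by
  by_cases hb : Module.length A (Ideal.span {b}) = ⊤
  · simp [hb]
  have := (isFiniteLength_iff_isNoetherian_isArtinian.1 (Module.length_ne_top_iff.1 hb)).2
  let f : Ideal.span {b} →ₗ[A] Ideal.span {b} := (LinearMap.toSpanSingleton A A b).restrict
    fun z _ ↦ Ideal.mul_mem_left _ z (Ideal.mem_span_singleton_self b)
  refine (Set.encard_le_encard fun μ hμ ↦ ?_).trans (encard_eigenvalues_le_length (K := K) f)
  obtain ⟨z, hz, hz0, hzb⟩ := exists_mul_eq_smul_of_mem_spectrum hμ.1 hμ.2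
  exact ⟨⟨z, hz⟩, by simpa using hz0, Subtype.ext hzb⟩

theorem exists_isMaximal_not_le (hA : Ring.jacobson A = ⊥) {L : Ideal A} (hL : L ≠ ⊥) :
    ∃ M : Ideal A, M.IsMaximal ∧ ¬ L ≤ M := by
  contrapose! hL
  rw [eq_bot_iff, ← hA, Ring.jacobson_eq_sInf_isMaximal]
  exact le_sInf hL

theorem mem_spectrum_of_algebraMap_sub_mem {M : Ideal A} (hM : M ≠ ⊤) {b : A} {μ : K}
    (h : algebraMap K A μ - b ∈ M) : μ ∈ spectrum K b :=
  fun hu ↦ hM (M.eq_top_of_isUnit_mem h hu)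

-- The coset `u + L` carries the induction: its elements share the residues prescribed so far, and
-- cutting `L` down by one more maximal left ideal costs one unit of length.
theorem exists_forall_subset_spectrum_add (hA : Ring.jacobson A = ⊥) (N : Ideal A) (s : Finset K)
    (hs : (s.card : ℕ∞) ≤ Module.length A N) :
    ∃ u ∈ N, ∃ L ≤ N, Module.length A N ≤ Module.length A L + s.card ∧
      ∀ w ∈ L, (s : Set K) ⊆ spectrum K (u + w) := by
  classical
  induction s using Finset.induction_on with
  | empty => exact ⟨0, N.zero_mem, N, le_rfl, by simp⟩
  | insert μ s hμ ih =>
    rw [Finset.card_insert_of_notMem hμ] at hs ⊢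
    push_cast at hs ⊢
    obtain ⟨u, hu, L, hLN, hlen, hspec⟩ := ih (le_self_add.trans hs)
    have hL : L ≠ ⊥ := by
      rintro rfl
      rw [Module.length_bot, zero_add] at hlen
      exact (ENat.add_one_le_iff (ENat.natCast_ne_top _)).1 (hs.trans hlen) |>.false
    obtain ⟨M, hM, hLM⟩ := exists_isMaximal_not_le hA hL
    have htop : L ⊔ M = ⊤ := hM.out.2 _ (right_lt_sup.2 hLM)
    obtain ⟨v, hv, m, hm, hvm⟩ : ∃ v ∈ L, ∃ m ∈ M, v + m = algebraMap K A μ - u :=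
      Submodule.mem_sup.1 (htop ▸ Submodule.mem_top)
    refine ⟨u + v, add_mem hu (hLN hv), L ⊓ M, inf_le_left.trans hLN, ?_, fun w hw ↦ ?_⟩
    · rwa [add_comm (s.card : ℕ∞), ← add_assoc, ← length_eq_length_inf_add_one hM.out hLM]
    · rw [Set.insert_subset_iff]
      constructor
      · apply mem_spectrum_of_algebraMap_sub_mem hM.ne_top
        rw [← sub_sub, ← sub_sub, ← hvm, add_sub_cancel_left]
        exact sub_mem hm hw.2
      · rw [add_assoc]
        exact hspec _ (add_mem hv hw.1)

end Spectrum

section SpectralRank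

variable {A : Type*} [Ring A] [Algebra ℂ A]

theorem srank_le_length (a : A) : srank a ≤ Module.length A (Ideal.span {a}) :=
  iSup_le fun x ↦ (encard_spectrum_diff_zero_le_length (x * a)).trans <|
    Module.length_le_of_injective _ <| Submodule.inclusion_injective <|
      (Ideal.span_singleton_le_iff_mem _).2 <|
        Ideal.mul_mem_left _ x (Ideal.mem_span_singleton_self a)

theorem length_le_srank (hA : Ring.jacobson A = ⊥) (a : A) :
    Module.length A (Ideal.span {a}) ≤ srank a := by
  refine ENat.forall_natCast_le_iff_le.1 fun n hn ↦ ?_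
  obtain ⟨s, hs0, rfl⟩ := (Set.infinite_of_finite_compl (s := ({0}ᶜ : Set ℂ))
    (by simp)).exists_subset_card_eq n
  obtain ⟨u, hu, L, -, -, hspec⟩ := exists_forall_subset_spectrum_add hA (Ideal.span {a}) s hn
  obtain ⟨x, rfl⟩ := Ideal.mem_span_singleton'.1 hu
  have hsub : (s : Set ℂ) ⊆ nzSpec (x * a) := fun μ hμ ↦
    ⟨by simpa using hspec 0 L.zero_mem hμ, hs0 hμ⟩
  calc (s.card : ℕ∞) = (s : Set ℂ).encard := (Set.encard_coe_eq_coe_finsetCard s).symm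
    _ ≤ (nzSpec (x * a)).encard := Set.encard_le_encard hsub
    _ ≤ srank a := le_iSup (fun x ↦ (nzSpec (x * a)).encard) x

theorem srank_eq_length (hA : Ring.jacobson A = ⊥) (a : A) :
    srank a = Module.length A (Ideal.span {a}) :=
  (srank_le_length a).antisymm (length_le_srank hA a)

theorem JacobsonSemisimple.ring_jacobson_eq_bot {R : Type*} [Ring R] (h : JacobsonSemisimple R) :
    Ring.jacobson R = ⊥ := by
  rw [← Ideal.jacobson_bot, ← TwoSidedIdeal.bot_asIdeal, ← TwoSidedIdeal.asIdeal_jacobson, h]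

end SpectralRank

section FiniteLengthIdeal

variable {R M : Type*} [Ring R] [AddCommGroup M] [Module R M]

theorem isFiniteLength_of_le {N P : Submodule R M} (h : N ≤ P) (hP : IsFiniteLength R P) :
    IsFiniteLength R N :=
  hP.of_injective (Submodule.inclusion_injective h)

theorem isFiniteLength_sup {N P : Submodule R M} (hN : IsFiniteLength R N)
    (hP : IsFiniteLength R P) : IsFiniteLength R ↥(N ⊔ P) := by
  rw [isFiniteLength_iff_isNoetherian_isArtinian] at hN hP ⊢
  obtain ⟨_, _⟩ := hN
  obtain ⟨_, _⟩ := hP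
  exact ⟨isNoetherian_sup N P, isArtinian_sup N P⟩

theorem isFiniteLength_map {M' : Type*} [AddCommGroup M'] [Module R M'] (f : M →ₗ[R] M')
    {N : Submodule R M} (hN : IsFiniteLength R N) : IsFiniteLength R (N.map f) :=
  hN.of_surjective (f.submoduleMap_surjective N)

theorem isFiniteLength_of_mem {a : R} {N : Ideal R} (ha : a ∈ N) (hN : IsFiniteLength R N) :
    IsFiniteLength R (Ideal.span {a}) :=
  isFiniteLength_of_le ((Ideal.span_singleton_le_iff_mem _).2 ha) hN

/-- The two-sided ideal of all `a` whose principal left ideal `Ra` has finite length as a left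
module: the classical socle when `R` has zero Jacobson radical. -/
def finiteLengthIdeal (R : Type*) [Ring R] : TwoSidedIdeal R :=
  .mk' {a | IsFiniteLength R (Ideal.span {a})}
    (isFiniteLength_of_mem (zero_mem ⊥) .of_subsingleton)
    (fun {a b} ha hb ↦ isFiniteLength_of_mem
      (add_mem (Submodule.mem_sup_left (Ideal.mem_span_singleton_self a))
        (Submodule.mem_sup_right (Ideal.mem_span_singleton_self b)))
      (isFiniteLength_sup ha hb))
    (fun {a} ha ↦ isFiniteLength_of_mem (neg_mem (Ideal.mem_span_singleton_self a)) ha)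
    (fun {x a} ha ↦ isFiniteLength_of_mem
      (Ideal.mul_mem_left _ x (Ideal.mem_span_singleton_self a)) ha)
    (fun {a x} ha ↦ isFiniteLength_of_mem
      (Submodule.mem_map_of_mem (f := LinearMap.toSpanSingleton R R x)
        (Ideal.mem_span_singleton_self a))
      (isFiniteLength_map _ ha))

theorem mem_finiteLengthIdeal {a : R} :
    a ∈ finiteLengthIdeal R ↔ IsFiniteLength R (Ideal.span {a}) :=
  TwoSidedIdeal.mem_mk' ..

theorem coe_finiteLengthIdeal_eq_socle {A : Type*} [Ring A] [Algebra ℂ A]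
    (hA : Ring.jacobson A = ⊥) : (finiteLengthIdeal A : Set A) = socle A := by
  ext a
  rw [SetLike.mem_coe, mem_finiteLengthIdeal, ← Module.length_ne_top_iff, ← srank_eq_length hA]
  rfl

theorem isSemisimpleModule_of_isFiniteLength (hR : Ring.jacobson R = ⊥) {N : Ideal R}
    (hN : IsFiniteLength R N) : IsSemisimpleModule R N := by
  have := (isFiniteLength_iff_isNoetherian_isArtinian.1 hN).2
  exact (IsArtinian.isSemisimpleModule_iff_jacobson R N).2
    (Module.jacobson_eq_bot_of_injective N.subtype N.subtype_injective hR)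

end FiniteLengthIdeal

section Prime

variable {R : Type*} [Ring R] {J : TwoSidedIdeal R}

/-- The right annihilator `{y | Jy = 0}` of a two-sided ideal, again as a two-sided ideal. -/
def rightAnnihilator (J : TwoSidedIdeal R) : TwoSidedIdeal R :=
  .mk' {y | ∀ x ∈ J, x * y = 0}
    (fun x _ ↦ mul_zero x)
    (fun ha hb x hx ↦ by rw [mul_add, ha x hx, hb x hx, add_zero])
    (fun ha x hx ↦ by rw [mul_neg, ha x hx, neg_zero])
    (fun {r _} ha x hx ↦ by rw [← mul_assoc, ha _ (J.mul_mem_right x r hx)])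
    (fun ha x hx ↦ by rw [← mul_assoc, ha x hx, zero_mul])

/-- The left annihilator `l(J) = {x | xJ = 0}` of a two-sided ideal, again as a two-sided ideal. -/
def leftAnnihilator (J : TwoSidedIdeal R) : TwoSidedIdeal R :=
  (Submodule.annihilator J.asIdeal).toTwoSided

theorem mem_rightAnnihilator {y : R} : y ∈ rightAnnihilator J ↔ ∀ x ∈ J, x * y = 0 :=
  TwoSidedIdeal.mem_mk' ..

theorem mem_leftAnnihilator {x : R} : x ∈ leftAnnihilator J ↔ ∀ y ∈ J, x * y = 0 := by
  simp only [leftAnnihilator, Ideal.mem_toTwoSided, Submodule.mem_annihilator,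
    TwoSidedIdeal.mem_asIdeal, smul_eq_mul]

theorem IsPrimeAlgebra.rightAnnihilator_eq_bot (hR : IsPrimeAlgebra R) (hJ : J ≠ ⊥) :
    rightAnnihilator J = ⊥ := by
  by_contra hann
  obtain ⟨x, hx, y, hy, hxy⟩ := hR _ _ hJ hann
  exact hxy (mem_rightAnnihilator.1 hy x hx)

theorem IsPrimeAlgebra.leftAnnihilator_eq_bot (hR : IsPrimeAlgebra R) (hJ : J ≠ ⊥) :
    leftAnnihilator J = ⊥ := by
  by_contra hann
  obtain ⟨x, hx, y, hy, hxy⟩ := hR _ _ hann hJ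
  exact hxy (mem_leftAnnihilator.1 hx y hy)

theorem IsPrimeAlgebra.le_asIdeal_of_isSemisimpleModule (hR : IsPrimeAlgebra R) (hJ : J ≠ ⊥)
    (N : Ideal R) [IsSemisimpleModule R N] : N ≤ J.asIdeal := by
  obtain ⟨C, hC⟩ := exists_isCompl (Submodule.comap N.subtype J.asIdeal)
  have hbot : C = ⊥ := by
    refine (Submodule.eq_bot_iff _).2 fun c hc ↦ Subtype.ext ?_
    rw [ZeroMemClass.coe_zero, ← TwoSidedIdeal.mem_bot, ← hR.rightAnnihilator_eq_bot hJ,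
      mem_rightAnnihilator]
    intro x hx
    have hxc : x • c = 0 := Submodule.disjoint_def.1 hC.disjoint _
      (J.mul_mem_right x c hx) (C.smul_mem x hc)
    exact congrArg Subtype.val hxc
  exact Submodule.comap_subtype_eq_top.1 (eq_top_of_isCompl_bot (hbot ▸ hC))

theorem IsPrimeAlgebra.isAtom_finiteLengthIdeal (hR : IsPrimeAlgebra R)
    (hjac : Ring.jacobson R = ⊥) (hne : finiteLengthIdeal R ≠ ⊥) :
    IsAtom (finiteLengthIdeal R) := by
  refine isAtom_iff_le_of_ge.2 ⟨hne, fun J hJ _ a ha ↦ ?_⟩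
  have := isSemisimpleModule_of_isFiniteLength hjac (mem_finiteLengthIdeal.1 ha)
  exact hR.le_asIdeal_of_isSemisimpleModule hJ _ (Ideal.mem_span_singleton_self a)

theorem le_of_isAtom_of_leftAnnihilator_eq_bot {I : TwoSidedIdeal R} (hI : IsAtom I)
    (hann : leftAnnihilator I = ⊥) (hJ : J ≠ ⊥) : I ≤ J := by
  rw [← hI.not_disjoint_iff_le, disjoint_iff]
  contrapose! hJ
  rw [eq_bot_iff, ← hann]
  refine fun x hx ↦ mem_leftAnnihilator.2 fun y hy ↦ ?_
  rw [← TwoSidedIdeal.mem_bot, ← hJ]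
  exact (TwoSidedIdeal.mem_inf R).2 ⟨I.mul_mem_left x y hy, J.mul_mem_right x y hx⟩

theorem isPrimeAlgebra_of_isAtom_of_leftAnnihilator_eq_bot {I : TwoSidedIdeal R} (hI : IsAtom I)
    (hann : leftAnnihilator I = ⊥) : IsPrimeAlgebra R := by
  intro J K hJ hK
  by_contra! h
  have hIK := le_of_isAtom_of_leftAnnihilator_eq_bot hI hann hK
  refine hJ (eq_bot_iff.2 (hann ▸ fun x hx ↦ mem_leftAnnihilator.2 fun y hy ↦ ?_))
  exact h x hx y (hIK hy)

theorem isPrimeAlgebra_iff_isAtom_finiteLengthIdeal (hjac : Ring.jacobson R = ⊥)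
    (hne : finiteLengthIdeal R ≠ ⊥) :
    IsPrimeAlgebra R ↔
      IsAtom (finiteLengthIdeal R) ∧ leftAnnihilator (finiteLengthIdeal R) = ⊥ :=
  ⟨fun hR ↦ ⟨hR.isAtom_finiteLengthIdeal hjac hne, hR.leftAnnihilator_eq_bot hne⟩,
    fun ⟨hatom, hann⟩ ↦ isPrimeAlgebra_of_isAtom_of_leftAnnihilator_eq_bot hatom hann⟩

end Prime

section Socle

variable {A : Type*} [Ring A] [Algebra ℂ A] {I : TwoSidedIdeal A}

theorem socleIsMinimalTwoSidedIdeal_iff_isAtom (hI : (I : Set A) = socle A) :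
    SocleIsMinimalTwoSidedIdeal A ↔ IsAtom I := by
  constructor
  · rintro ⟨I', hI', hne, hmin⟩
    obtain rfl : I' = I := SetLike.coe_injective (hI'.trans hI.symm)
    exact isAtom_iff_le_of_ge.2 ⟨hne, fun J hJ hle ↦ ((hmin J hle).resolve_left hJ).ge⟩
  · exact fun h ↦ ⟨I, hI, h.1, fun _ ↦ h.le_iff.1⟩

theorem leftAnnSocleTrivial_iff_leftAnnihilator_eq_bot (hI : (I : Set A) = socle A) :
    LeftAnnSocleTrivial A ↔ leftAnnihilator I = ⊥ := by
  have hcoe : (leftAnnihilator I : Set A) = {x | ∀ y ∈ socle A, x * y = 0} := by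
    ext x
    simp only [SetLike.mem_coe, mem_leftAnnihilator, ← hI, Set.mem_ofPred_eq]
  rw [LeftAnnSocleTrivial, ← hcoe, ← TwoSidedIdeal.coe_bot, SetLike.coe_set_eq]

theorem prime_iff_socle_minimal_and_leftAnn_trivial_general (hss : JacobsonSemisimple A)
    (hsoc : socle A ≠ {0}) :
    IsPrimeAlgebra A ↔ (SocleIsMinimalTwoSidedIdeal A ∧ LeftAnnSocleTrivial A) := by
  have hjac := hss.ring_jacobson_eq_bot
  have hcoe := coe_finiteLengthIdeal_eq_socle hjac
  have hne : finiteLengthIdeal A ≠ ⊥ := by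
    intro h
    rw [← hcoe, h, TwoSidedIdeal.coe_bot] at hsoc
    exact hsoc rfl
  rw [socleIsMinimalTwoSidedIdeal_iff_isAtom hcoe,
    leftAnnSocleTrivial_iff_leftAnnihilator_eq_bot hcoe,
    isPrimeAlgebra_iff_isAtom_finiteLengthIdeal hjac hne]

end Socle

theorem prime_iff_socle_minimal_and_leftAnn_trivial
    {A : Type*} [NormedRing A] [NormOneClass A] [NormedAlgebra ℂ A] [CompleteSpace A]
    (hss : JacobsonSemisimple A) (hsoc : socle A ≠ {0}) :
    IsPrimeAlgebra A ↔ (SocleIsMinimalTwoSidedIdeal A ∧ LeftAnnSocleTrivial A) :=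
  prime_iff_socle_minimal_and_leftAnn_trivial_general hss hsoc
end
end

section
/- Let A be a complex semisimple unital Banach algebra, let N be a nonempty open subset of A, and let a, b ∈ A. If σ(bx) is finite for all x ∈ N and σ'(ax) ⊆ σ'(bx) for all x ∈ N, then σ'(ax) ⊆ σ'(bx) for all x ∈ A. -/
open Complex

noncomputable section

/-!
Let `f` and `g` be entire functions of `z` with values in the algebra, and let `μ i` be finitely
many spectral values of them at `z₀`. Each `μ i` is an eigenvalue of the adjoint of left or right
multiplication. Letting these multiplications act on different variables of multilinear forms on
the algebra makes them commute without enlarging their spectra, and the product of the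
eigenfunctionals becomes a joint eigenvector with eigenvalues `μ i`. Hence, if a polynomial in the
spectral values vanishes on all tuples for `z` in an open set, then the corresponding polynomial in
the multiplications is an entire function which is quasinilpotent on that set. By the three circles
theorem applied to its powers it is quasinilpotent everywhere, so the polynomial vanishes at `μ`
too. For the polynomial expressing that the `μ i` are distinct and nonzero this says: if `f` and `g`
admit such spectral values at `z₀`, they do so on a dense set of `z`.

By Baire's theorem the number of nonzero spectral values of `g` is therefore bounded. Wherever it
is maximal, a point of `σ'(f z) \ σ'(g z)` would add one more value to `σ'(g w)` for some `w` in the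
open set. The maximum is attained on a dense set, and the inclusion passes to limits, because
isolated spectral values depend continuously on the element (Newburgh's theorem).
-/

open Filter Topology Metric
open scoped NNReal ENNReal

section SpectralRadius

theorem spectralRadius_eq_zero_iff {𝕜 A : Type*} [NormedField 𝕜] [Ring A] [Algebra 𝕜 A] {a : A} :
    spectralRadius 𝕜 a = 0 ↔ ∀ z ∈ spectrum 𝕜 a, z = 0 := by
  simp [spectralRadius]

variable {B : Type*} [NormedRing B] [NormedAlgebra ℂ B]

theorem exists_nnnorm_pow_lt_of_spectralRadius_lt [CompleteSpace B] {x : B} {δ : ℝ≥0}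
    (h : spectralRadius ℂ x < δ) : ∃ n ≠ 0, ‖x ^ n‖₊ < δ ^ n := by
  have gelfand := spectrum.pow_nnnorm_pow_one_div_tendsto_nhds_spectralRadius x
  obtain ⟨n, hn, hn0⟩ :=
    ((gelfand.eventually_lt_const h).and (eventually_ne_atTop 0)).exists
  refine ⟨n, hn0, ?_⟩
  rw [one_div, ENNReal.rpow_inv_lt_iff (by positivity), ENNReal.rpow_natCast] at hn
  exact_mod_cast hn

theorem exists_forall_nnnorm_pow_lt_of_isCompact [CompleteSpace B] {X : Type*}
    [TopologicalSpace X] {K : Set X} (hK : IsCompact K) {g : X → B} (hg : ContinuousOn g K)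
    {δ : ℝ≥0} (h : ∀ x ∈ K, spectralRadius ℂ (g x) < δ) :
    ∃ n ≠ 0, ∀ x ∈ K, ‖g x ^ n‖₊ < δ ^ n := by
  have pow_lt {y : B} {m n : ℕ} (hn : n ≠ 0) (hy : ‖y ^ m‖₊ < δ ^ m) :
      ‖y ^ (m * n)‖₊ < δ ^ (m * n) := by
    rw [pow_mul, pow_mul]
    exact (nnnorm_pow_le' _ hn.bot_lt).trans_lt (pow_lt_pow_left₀ hy zero_le hn)
  refine hK.induction_on (p := fun s ↦ ∃ n ≠ 0, ∀ x ∈ s, ‖g x ^ n‖₊ < δ ^ n)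
    ⟨1, one_ne_zero, by simp⟩
    (fun s t hst ⟨n, hn, ht⟩ ↦ ⟨n, hn, fun x hx ↦ ht x (hst hx)⟩) ?_ fun x hx ↦ ?_
  · rintro s t ⟨m, hm, hs⟩ ⟨n, hn, ht⟩
    refine ⟨m * n, mul_ne_zero hm hn, ?_⟩
    rintro x (hx | hx)
    · exact pow_lt hn (hs x hx)
    · exact mul_comm n m ▸ pow_lt hm (ht x hx)
  · obtain ⟨n, hn, hxn⟩ := exists_nnnorm_pow_lt_of_spectralRadius_lt (h x hx)
    exact ⟨_, ((hg x hx).pow n).nnnorm.eventually_lt_const hxn, n, hn, fun _ ↦ id⟩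

theorem norm_le_interp_of_norm_le_on_spheres {F : Type*} [NormedAddCommGroup F]
    [NormedSpace ℂ F] {f : ℂ → F} (hf : Differentiable ℂ f) {c z : ℂ} {r R a b : ℝ} (hr : 0 < r)
    (hrR : r < R) (hrz : r ≤ dist z c) (hzR : dist z c ≤ R)
    (ha : ∀ w ∈ sphere c r, ‖f w‖ ≤ a) (hb : ∀ w ∈ sphere c R, ‖f w‖ ≤ b) :
    ‖f z‖ ≤ a ^ (1 - (Real.log (dist z c) - Real.log r) / (Real.log R - Real.log r)) *
      b ^ ((Real.log (dist z c) - Real.log r) / (Real.log R - Real.log r)) := by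
  have hR : 0 < R := hr.trans hrR
  have hz : 0 < dist z c := hr.trans_le hrz
  have exp_log_sub : c + exp (log (z - c)) = z := by
    rw [exp_log (sub_ne_zero.2 (dist_pos.1 hz)), add_sub_cancel]
  have re_log_sub : (log (z - c)).re = Real.log (dist z c) := by rw [log_re, dist_eq_norm]
  have dist_exp (w : ℂ) : dist (c + exp w) c = Real.exp w.re := by simp [dist_eq_norm, norm_exp]
  have bdd : BddAbove ((norm ∘ fun w ↦ f (c + exp w)) ''
      HadamardThreeLines.verticalClosedStrip (Real.log r) (Real.log R)) := by
    obtain ⟨M, hM⟩ := (isCompact_closedBall c R).exists_bound_of_continuousOn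
      hf.continuous.continuousOn
    refine ⟨M, ?_⟩
    rintro _ ⟨w, hw, rfl⟩
    exact hM _ (by rw [mem_closedBall, dist_exp]; exact (Real.le_log_iff_exp_le hR).1 hw.2)
  have three_lines := HadamardThreeLines.norm_le_interp_of_mem_verticalClosedStrip'
    (f := fun w ↦ f (c + exp w)) (z := log (z - c)) (a := a) (b := b)
    (Real.log_lt_log hr hrR)
    (by rw [HadamardThreeLines.verticalClosedStrip, Set.mem_preimage, re_log_sub]
        exact ⟨Real.log_le_log hr hrz, Real.log_le_log hz hzR⟩)
    (hf.comp (differentiable_exp.const_add c)).diffContOnCl bdd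
    (fun w hw ↦ ha _ (by rw [mem_sphere, dist_exp, show w.re = _ from hw, Real.exp_log hr]))
    (fun w hw ↦ hb _ (by rw [mem_sphere, dist_exp, show w.re = _ from hw, Real.exp_log hR]))
  rwa [exp_log_sub, re_log_sub] at three_lines

-- The outer radius is chosen so that `dist z c` is the geometric mean of the two radii.
theorem norm_sq_le_mul_of_norm_le_on_spheres {F : Type*} [NormedAddCommGroup F] [NormedSpace ℂ F]
    {f : ℂ → F} (hf : Differentiable ℂ f) {c z : ℂ} {r a b : ℝ} (hr : 0 < r) (hz : r < dist z c)
    (ha : ∀ w ∈ sphere c r, ‖f w‖ ≤ a) (hb : ∀ w ∈ sphere c (dist z c ^ 2 / r), ‖f w‖ ≤ b) :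
    ‖f z‖ ^ 2 ≤ a * b := by
  have hzc : 0 < dist z c := hr.trans hz
  have lt_outer : dist z c < dist z c ^ 2 / r := by
    rw [lt_div_iff₀ hr, sq]; gcongr
  have a_nonneg : 0 ≤ a := (norm_nonneg _).trans (ha (c + r) (by simp [hr.le]))
  have b_nonneg : 0 ≤ b :=
    (norm_nonneg _).trans (hb (c + (dist z c ^ 2 / r : ℝ)) (by simp [abs_of_pos hr]))
  have log_lt : 0 < Real.log (dist z c) - Real.log r := sub_pos.2 (Real.log_lt_log hr hz)
  have ratio : (Real.log (dist z c) - Real.log r) /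
      (Real.log (dist z c ^ 2 / r) - Real.log r) = 1 / 2 := by
    rw [Real.log_div (by positivity) hr.ne', Real.log_pow,
      div_eq_div_iff (by push_cast; linarith) two_ne_zero]
    push_cast; ring
  have interp := norm_le_interp_of_norm_le_on_spheres hf hr (hz.trans lt_outer) hz.le lt_outer.le
    ha hb
  rw [ratio, sub_half, ← Real.sqrt_eq_rpow, ← Real.sqrt_eq_rpow, ← Real.sqrt_mul a_nonneg] at interp
  exact (Real.le_sqrt (norm_nonneg _) (by positivity)).1 interp

theorem spectralRadius_eq_zero_of_eventually [NormOneClass B] [CompleteSpace B] {f : ℂ → B}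
    (hf : Differentiable ℂ f) {c : ℂ} (h : ∀ᶠ z in 𝓝 c, spectralRadius ℂ (f z) = 0) (z : ℂ) :
    spectralRadius ℂ (f z) = 0 := by
  obtain ⟨r, hr, hball⟩ := nhds_basis_closedBall.eventually_iff.1 h
  obtain hz | hz := le_or_gt (dist z c) r
  · exact hball hz
  obtain ⟨M, hM⟩ := (isCompact_sphere c (dist z c ^ 2 / r)).exists_bound_of_continuousOn
    hf.continuous.continuousOn
  have M_nonneg : 0 ≤ M :=
    (norm_nonneg _).trans (hM (c + (dist z c ^ 2 / r : ℝ)) (by simp [abs_of_pos hr]))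
  refine spectralRadius_eq_zero_iff.2 fun lam hlam ↦ ?_
  have norm_sq_le (δ : ℝ≥0) (hδ : 0 < δ) : ‖lam‖ ^ 2 ≤ δ * M := by
    obtain ⟨n, hn, hsmall⟩ := exists_forall_nnnorm_pow_lt_of_isCompact
      (isCompact_sphere c r) hf.continuous.continuousOn (δ := δ) fun w hw ↦ by
        rw [hball (sphere_subset_closedBall hw)]; exact_mod_cast hδ
    refine le_of_pow_le_pow_left₀ hn (by positivity) ?_
    calc (‖lam‖ ^ 2) ^ n = ‖lam ^ n‖ ^ 2 := by rw [norm_pow, pow_right_comm]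
      _ ≤ ‖f z ^ n‖ ^ 2 := by
        gcongr
        exact spectrum.norm_le_norm_of_mem (spectrum.pow_mem_pow _ n hlam)
      _ ≤ δ ^ n * M ^ n := norm_sq_le_mul_of_norm_le_on_spheres (hf.pow n) hr hz
        (fun w hw ↦ mod_cast (hsmall w hw).le)
        (fun w hw ↦ (norm_pow_le _ n).trans (by gcongr; exact hM w hw))
      _ = (δ * M) ^ n := (mul_pow _ _ n).symm
  have sq_le_zero : ‖lam‖ ^ 2 ≤ 0 * M := by
    have lim : Tendsto (fun δ : ℝ≥0 ↦ δ * M) (𝓝[>] 0) (𝓝 (0 * M)) := by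
      exact (NNReal.continuous_coe.mul_const M).continuousWithinAt
    exact ge_of_tendsto lim (eventually_mem_nhdsWithin.mono norm_sq_le)
  simpa using sq_le_zero

end SpectralRadius

section FreeAlgebra

variable {ι : Type*}

theorem differentiable_lift_freeAlgebra {𝕜 E B : Type*} [NontriviallyNormedField 𝕜]
    [NormedAddCommGroup E] [NormedSpace 𝕜 E] [NormedRing B] [NormedAlgebra 𝕜 B] {t : ι → E → B}
    (ht : ∀ i, Differentiable 𝕜 (t i)) (P : FreeAlgebra 𝕜 ι) :
    Differentiable 𝕜 fun z ↦ FreeAlgebra.lift 𝕜 (fun i ↦ t i z) P := by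
  induction P using FreeAlgebra.induction with
  | grade0 r => simp
  | grade1 i => simpa using ht i
  | mul P Q hP hQ => simpa using hP.fun_mul hQ
  | add P Q hP hQ => simpa using hP.fun_add hQ

theorem lift_freeAlgebra_apply_eq_smul {𝕜 V : Type*} [NontriviallyNormedField 𝕜]
    [NormedAddCommGroup V] [NormedSpace 𝕜 V] {t : ι → V →L[𝕜] V} {μ : ι → 𝕜} {v : V}
    (h : ∀ i, t i v = μ i • v) (P : FreeAlgebra 𝕜 ι) :
    FreeAlgebra.lift 𝕜 t P v = FreeAlgebra.lift 𝕜 μ P • v := by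
  induction P using FreeAlgebra.induction with
  | grade0 r => simp [Algebra.algebraMap_eq_smul_one]
  | grade1 i => simpa using h i
  | mul P Q hP hQ => simp [hP, hQ, smul_smul, mul_comm]
  | add P Q hP hQ => simp [hP, hQ, add_smul]

theorem mem_spectrum_of_apply_eq_smul {𝕜 V : Type*} [NontriviallyNormedField 𝕜]
    [NormedAddCommGroup V] [NormedSpace 𝕜 V] {T : V →L[𝕜] V} {z : 𝕜} {v : V} (hv : v ≠ 0)
    (h : T v = z • v) : z ∈ spectrum 𝕜 T := by
  rintro ⟨u, hu⟩
  have killed : (u : V →L[𝕜] V) v = 0 := by simp [hu, h, Algebra.algebraMap_eq_smul_one]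
  apply hv
  calc v = (↑u⁻¹ * ↑u : V →L[𝕜] V) v := by simp
    _ = 0 := by rw [mul_apply_eq_comp, killed, map_zero]

theorem exists_lift_freeAlgebra_ne_zero_iff (K ι : Type*) [CommRing K] [IsDomain K] [Finite ι] :
    ∃ P : FreeAlgebra K ι, ∀ μ : ι → K,
      FreeAlgebra.lift K μ P ≠ 0 ↔ Function.Injective μ ∧ ∀ i, μ i ≠ 0 := by
  classical
  have := Fintype.ofFinite ι
  let x := FreeAlgebra.ι K (X := ι)
  refine ⟨(Finset.univ.offDiag.toList.map fun p ↦ x p.1 - x p.2).prod *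
    (Finset.univ.toList.map x).prod, fun μ ↦ ?_⟩
  have injective_iff : Function.Injective μ ↔ ∀ p ∈ Finset.univ.offDiag, μ p.1 - μ p.2 ≠ 0 := by
    simp [sub_ne_zero, Function.Injective, not_imp_not]
  rw [injective_iff, map_mul, map_list_prod, map_list_prod, List.map_map, List.map_map,
    Finset.prod_map_toList, Finset.prod_map_toList, mul_ne_zero_iff, Finset.prod_ne_zero_iff,
    Finset.prod_ne_zero_iff]
  simp [x]

end FreeAlgebra

section CommutingTuples

theorem isUnit_of_isUnit_coe_centralizer {R A : Type*} [CommSemiring R] [Semiring A]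
    [Algebra R A] {s : Set A}
    {x : Subalgebra.centralizer R s} (hx : IsUnit (x : A)) : IsUnit x := by
  obtain ⟨u, hu⟩ := hx
  have inv_mem : (↑u⁻¹ : A) ∈ Subalgebra.centralizer R s := fun y hy ↦
    (show Commute y u from hu ▸ x.2 y hy).units_inv_right
  exact ⟨⟨x, ⟨_, inv_mem⟩, Subtype.ext (by simp [← hu]), Subtype.ext (by simp [← hu])⟩, rfl⟩

theorem exists_lift_freeAlgebra_eq_of_mem_spectrum {B ι : Type*} [NormedRing B]
    [NormedAlgebra ℂ B] [CompleteSpace B] {t : ι → B} (ht : ∀ i j, Commute (t i) (t j))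
    {P : FreeAlgebra ℂ ι} {z : ℂ} (hz : z ∈ spectrum ℂ (FreeAlgebra.lift ℂ t P)) :
    ∃ μ : ι → ℂ, (∀ i, μ i ∈ spectrum ℂ (t i)) ∧ FreeAlgebra.lift ℂ μ P = z := by
  let T := Set.range t
  have commute_T : ∀ a ∈ T, ∀ b ∈ T, a * b = b * a := by
    rintro _ ⟨i, rfl⟩ _ ⟨j, rfl⟩
    exact ht i j
  let C : Subalgebra ℂ B := Subalgebra.centralizer ℂ T.centralizer
  let s (i : ι) : C := ⟨t i, Set.subset_centralizer_centralizer ⟨i, rfl⟩⟩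
  have : CompleteSpace C := (Set.isClosed_centralizer T.centralizer).completeSpace_coe
  let _ : NormedCommRing C :=
    { (inferInstance : NormedRing C) with
      mul_comm := fun a b ↦ Subtype.ext
        (Set.centralizer_centralizer_comm_of_comm commute_T _ a.2 _ b.2) }
  have lift_s : C.val (FreeAlgebra.lift ℂ s P) = FreeAlgebra.lift ℂ t P := by
    rw [← AlgHom.comp_apply]
    congr 1
    ext i
    simp [s]
  obtain ⟨χ, hχ⟩ := WeakDual.CharacterSpace.mem_spectrum_iff_exists.1
    (AlgHom.spectrum_apply_subset C.val _ (lift_s ▸ hz))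
  refine ⟨fun i ↦ χ (s i), fun i h ↦ ?_, ?_⟩
  · exact WeakDual.CharacterSpace.apply_mem_spectrum χ (s i) (isUnit_of_isUnit_coe_centralizer h)
  · rw [← hχ, ← AlgHom.coe_coe χ, ← AlgHom.comp_apply]
    congr 1
    ext i
    simp

end CommutingTuples

section PrecompAt

variable {𝕜 V G ι : Type*} [NontriviallyNormedField 𝕜] [NormedAddCommGroup V] [NormedSpace 𝕜 V]
  [NormedAddCommGroup G] [NormedSpace 𝕜 G] [Fintype ι] [DecidableEq ι]

variable (𝕜 V G) in
/-- The operator `Φ ↦ Φ(m₁, …, u mᵢ, …, mₙ)` on multilinear maps that precomposes the `i`-th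
variable with `u`, as a function of `u`. -/
def precompAt (i : ι) : (V →L[𝕜] V) →L[𝕜]
    ContinuousMultilinearMap 𝕜 (fun _ : ι ↦ V) G →L[𝕜]
      ContinuousMultilinearMap 𝕜 (fun _ : ι ↦ V) G :=
  (ContinuousMultilinearMap.compContinuousLinearMapContinuousMultilinear 𝕜
    (fun _ : ι ↦ V) (fun _ : ι ↦ V) G).toContinuousLinearMap
      (fun _ ↦ ContinuousLinearMap.id 𝕜 V) i

theorem precompAt_apply (i : ι) (u : V →L[𝕜] V)
    (Φ : ContinuousMultilinearMap 𝕜 (fun _ : ι ↦ V) G) (m : ι → V) :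
    precompAt 𝕜 V G i u Φ m = Φ (Function.update m i (u (m i))) := by
  change Φ (fun j ↦ Function.update (fun _ ↦ ContinuousLinearMap.id 𝕜 V) i u j (m j)) = _
  congr 1
  ext j
  obtain rfl | hj := eq_or_ne j i
  · simp
  · simp [hj]

theorem commute_precompAt {i j : ι} (hij : i ≠ j) (u v : V →L[𝕜] V) :
    Commute (precompAt 𝕜 V G i u) (precompAt 𝕜 V G j v) := by
  ext Φ m
  simp only [mul_apply_eq_comp, precompAt_apply]
  rw [Function.update_of_ne hij.symm, Function.update_of_ne hij, Function.update_comm hij]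

theorem precompAt_mul (i : ι) (u v : V →L[𝕜] V) :
    precompAt 𝕜 V G i (u * v) = precompAt 𝕜 V G i v * precompAt 𝕜 V G i u := by
  ext Φ m
  simp [precompAt_apply]

theorem precompAt_one (i : ι) : precompAt 𝕜 V G i 1 = 1 := by
  ext Φ m
  simp [precompAt_apply]

theorem precompAt_mkPiAlgebra_comp {R : Type*} [NormedCommRing R] [NormedAlgebra 𝕜 R]
    {φ : ι → V →L[𝕜] R} {i : ι} {u : V →L[𝕜] V} {z : 𝕜} (h : ∀ y, φ i (u y) = z • φ i y) :
    precompAt 𝕜 V R i u ((ContinuousMultilinearMap.mkPiAlgebra 𝕜 ι R).compContinuousLinearMap φ) =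
      z • (ContinuousMultilinearMap.mkPiAlgebra 𝕜 ι R).compContinuousLinearMap φ := by
  ext m
  have factor_off : ∀ j ∈ Finset.univ.erase i,
      φ j (Function.update m i (u (m i)) j) = φ j (m j) := fun j hj ↦ by
    rw [Function.update_of_ne (Finset.ne_of_mem_erase hj)]
  simp only [precompAt_apply, smul_apply,
    ContinuousMultilinearMap.compContinuousLinearMap_apply,
    ContinuousMultilinearMap.mkPiAlgebra_apply, ← Finset.mul_prod_erase _ _ (Finset.mem_univ i),
    Finset.prod_congr rfl factor_off, Function.update_self, h, smul_mul_assoc]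

theorem spectrum_map_subset_of_isUnit {R A B : Type*} [CommRing R] [Ring A] [Algebra R A] [Ring B]
    [Algebra R B] (F : A →ₗ[R] B) (h_one : F 1 = 1) (h_unit : ∀ u : Aˣ, IsUnit (F u)) (x : A) :
    spectrum R (F x) ⊆ spectrum R x := by
  rintro z hz ⟨u, hu⟩
  have map_sub_eq : F u = algebraMap R B z - F x := by
    rw [hu, Algebra.algebraMap_eq_smul_one, map_sub, map_smul, h_one,
      ← Algebra.algebraMap_eq_smul_one]
  exact hz (by rw [spectrum.mem_resolventSet_iff, ← map_sub_eq]; exact h_unit u)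

theorem spectrum_precompAt_subset (i : ι) (u : V →L[𝕜] V) :
    spectrum 𝕜 (precompAt 𝕜 V G i u) ⊆ spectrum 𝕜 u := by
  refine spectrum_map_subset_of_isUnit (precompAt 𝕜 V G i).toLinearMap (precompAt_one i)
    (fun v ↦ ?_) u
  refine ⟨⟨precompAt 𝕜 V G i v, precompAt 𝕜 V G i ↑v⁻¹, ?_, ?_⟩, rfl⟩ <;>
    simp [← precompAt_mul, precompAt_one]

end PrecompAt

section DualEigenvectors

theorem spectrum_mul_left_subset {𝕜 A : Type*} [NontriviallyNormedField 𝕜] [NormedRing A]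
    [NormedAlgebra 𝕜 A] (w : A) :
    spectrum 𝕜 (ContinuousLinearMap.mul 𝕜 A w) ⊆ spectrum 𝕜 w := by
  refine spectrum_map_subset_of_isUnit (ContinuousLinearMap.mul 𝕜 A).toLinearMap (by ext; simp)
    (fun u ↦ ?_) w
  refine ⟨⟨ContinuousLinearMap.mul 𝕜 A u, ContinuousLinearMap.mul 𝕜 A ↑u⁻¹, ?_, ?_⟩, rfl⟩ <;>
    ext <;> simp

theorem spectrum_mul_right_subset {𝕜 A : Type*} [NontriviallyNormedField 𝕜] [NormedRing A]
    [NormedAlgebra 𝕜 A] (w : A) :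
    spectrum 𝕜 ((ContinuousLinearMap.mul 𝕜 A).flip w) ⊆ spectrum 𝕜 w := by
  refine spectrum_map_subset_of_isUnit (ContinuousLinearMap.mul 𝕜 A).flip.toLinearMap (by ext; simp)
    (fun u ↦ ?_) w
  refine ⟨⟨(ContinuousLinearMap.mul 𝕜 A).flip u, (ContinuousLinearMap.mul 𝕜 A).flip ↑u⁻¹, ?_, ?_⟩,
    rfl⟩ <;> ext <;> simp

variable {𝕜 A : Type*} [RCLike 𝕜] [NormedRing A] [NormedAlgebra 𝕜 A] [CompleteSpace A]

theorem exists_dual_ne_zero_of_forall_not_isUnit {T : A →L[𝕜] A} (hT : ∀ y, ¬ IsUnit (T y)) :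
    ∃ φ : A →L[𝕜] 𝕜, φ ≠ 0 ∧ ∀ y, φ (T y) = 0 := by
  let p : Submodule 𝕜 A := T.range.topologicalClosure
  have p_closed : IsClosed (p : Set A) := Submodule.isClosed_topologicalClosure _
  have one_notMem : (1 : A) ∉ p := fun h ↦ by
    obtain ⟨_, unit, y, rfl⟩ := mem_closure_iff_nhds.1 h _ (Units.isOpen.mem_nhds isUnit_one)
    exact hT y unit
  obtain ⟨φ, hφ⟩ :=
    SeparatingDual.exists_ne_zero (R := 𝕜) (x := p.mkQ 1) (by simpa using one_notMem)
  refine ⟨φ.comp p.mkQL, fun h ↦ hφ (DFunLike.congr_fun h 1), fun y ↦ ?_⟩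
  have mem : T y ∈ p := T.range.le_topologicalClosure ⟨y, rfl⟩
  simp [(Submodule.Quotient.mk_eq_zero p).2 mem]

theorem exists_dual_eigenvector_of_mem_spectrum {w : A} {z : 𝕜} (hz : z ∈ spectrum 𝕜 w) :
    ∃ S : A →L[𝕜] A →L[𝕜] A, (∀ x, spectrum 𝕜 (S x) ⊆ spectrum 𝕜 x) ∧
      ∃ φ : A →L[𝕜] 𝕜, φ ≠ 0 ∧ ∀ y, φ (S w y) = z • φ y := by
  have eigen {S : A →L[𝕜] A →L[𝕜] A} (S_one : S 1 = 1)
      (hS : ∀ y, ¬ IsUnit (S (algebraMap 𝕜 A z - w) y)) :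
      ∃ φ : A →L[𝕜] 𝕜, φ ≠ 0 ∧ ∀ y, φ (S w y) = z • φ y := by
    obtain ⟨φ, hφ, hker⟩ := exists_dual_ne_zero_of_forall_not_isUnit hS
    refine ⟨φ, hφ, fun y ↦ ?_⟩
    rw [eq_comm, ← sub_eq_zero]
    simpa [Algebra.algebraMap_eq_smul_one, S_one] using hker y
  -- If both the left and the right multiples of `z - w` contained a unit, `z - w` would be one.
  by_cases right_inv : ∃ y, IsUnit ((algebraMap 𝕜 A z - w) * y)
  · refine ⟨(ContinuousLinearMap.mul 𝕜 A).flip, spectrum_mul_right_subset,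
      eigen (by ext; simp) fun y unit ↦ hz ?_⟩
    obtain ⟨x, hx⟩ := right_inv
    obtain ⟨r, hr⟩ := hx.exists_right_inv
    obtain ⟨l, hl⟩ := unit.exists_left_inv
    exact isUnit_iff_exists_and_exists.2 ⟨⟨x * r, by rw [← mul_assoc, hr]⟩,
      ⟨l * y, by rw [mul_assoc]; exact hl⟩⟩
  · exact ⟨ContinuousLinearMap.mul 𝕜 A, spectrum_mul_left_subset,
      eigen (by ext; simp) fun y unit ↦ right_inv ⟨y, unit⟩⟩

end DualEigenvectors

section Resolvent

theorem continuousAt_uncurry_resolvent {𝕜 A : Type*} [NontriviallyNormedField 𝕜] [NormedRing A]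
    [NormedAlgebra 𝕜 A] [CompleteSpace A] {a : A} {z : 𝕜} (hz : z ∈ resolventSet 𝕜 a) :
    ContinuousAt (fun p : A × 𝕜 ↦ resolvent p.1 p.2) (a, z) := by
  have inverse_at : ContinuousAt Ring.inverse (algebraMap 𝕜 A z - a) :=
    NormedRing.inverse_continuousAt hz.unit
  exact inverse_at.comp (f := fun p : A × 𝕜 ↦ algebraMap 𝕜 A p.2 - p.1) (x := (a, z)) (by fun_prop)

theorem exists_eventually_norm_resolvent_le {𝕜 A : Type*} [NontriviallyNormedField 𝕜]
    [NormedRing A] [NormedAlgebra 𝕜 A] [CompleteSpace A] {a : A} {K : Set 𝕜} (hK : IsCompact K)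
    (hKa : K ⊆ resolventSet 𝕜 a) : ∃ C, ∀ᶠ b in 𝓝 a, ∀ z ∈ K, ‖resolvent b z‖ ≤ C := by
  obtain ⟨C, hC⟩ := hK.exists_bound_of_continuousOn (f := resolvent a) fun z hz ↦
    (spectrum.hasDerivAt_resolvent_const_left (hKa hz)).continuousAt.continuousWithinAt
  refine ⟨C + 1, hK.eventually_forall_of_forall_eventually fun z hz ↦ ?_⟩
  filter_upwards [(continuousAt_uncurry_resolvent (hKa hz)).norm.eventually_lt_const
    ((hC z hz).trans_lt (lt_add_one C))] with p hp using hp.le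

theorem mem_resolventSet_of_norm_resolvent_mul_sub_lt_one {R A : Type*} [CommRing R]
    [NormedRing A] [Algebra R A] [HasSummableGeomSeries A] {a b : A} {z : R}
    (hz : z ∈ resolventSet R b) (h : ‖resolvent b z * (a - b)‖ < 1) : z ∈ resolventSet R a := by
  have factor : algebraMap R A z - a =
      (algebraMap R A z - b) * (1 - resolvent b z * (a - b)) := by
    rw [mul_sub, ← mul_assoc, resolvent, Ring.mul_inverse_cancel _ hz]
    noncomm_ring
  rw [spectrum.mem_resolventSet_iff, factor]
  exact hz.mul (isUnit_one_sub_of_norm_lt_one h)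

theorem eventually_nonempty_spectrum_inter_closedBall {A : Type*} [NormedRing A]
    [NormedAlgebra ℂ A] [CompleteSpace A] {a : A} {α : ℂ} (hα : α ∈ spectrum ℂ a) {r : ℝ}
    (hr : 0 < r) (hsphere : sphere α r ⊆ resolventSet ℂ a) :
    ∀ᶠ b in 𝓝 a, (spectrum ℂ b ∩ closedBall α r).Nonempty := by
  obtain ⟨C, hC⟩ := exists_eventually_norm_resolvent_le (isCompact_sphere α r) hsphere
  have mul_norm_lt : ∀ᶠ b in 𝓝 a, C * ‖a - b‖ < 1 :=
    (show ContinuousAt (fun b ↦ C * ‖a - b‖) a by fun_prop).eventually_lt_const (by simp)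
  filter_upwards [hC, mul_norm_lt] with b bound_sphere close
  by_contra disjoint
  have resolvent_on_ball : closedBall α r ⊆ resolventSet ℂ b := fun z hz ↦ by
    by_contra hzb
    exact disjoint ⟨z, hzb, hz⟩
  have diff : DifferentiableOn ℂ (resolvent b) (closure (ball α r)) := fun z hz ↦
    (spectrum.hasDerivAt_resolvent_const_left (resolvent_on_ball
      (closure_ball_subset_closedBall hz))).differentiableAt.differentiableWithinAt
  have bound_center : ‖resolvent b α‖ ≤ C :=
    norm_le_of_forall_mem_frontier_norm_le isBounded_ball diff.diffContOnCl
      (by rwa [frontier_ball α hr.ne']) (subset_closure (mem_ball_self hr))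
  refine hα (mem_resolventSet_of_norm_resolvent_mul_sub_lt_one
    (resolvent_on_ball (mem_closedBall_self hr.le)) ?_)
  calc ‖resolvent b α * (a - b)‖ ≤ C * ‖a - b‖ := (norm_mul_le _ _).trans (by gcongr)
    _ < 1 := close

theorem eventually_nonempty_spectrum_inter {A : Type*} [NormedRing A]
    [NormedAlgebra ℂ A] [CompleteSpace A] {a : A} {α : ℂ} (hα : α ∈ spectrum ℂ a)
    (isolated : ∀ᶠ z in 𝓝[≠] α, z ∉ spectrum ℂ a) {U : Set ℂ} (hU : U ∈ 𝓝 α) :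
    ∀ᶠ b in 𝓝 a, (spectrum ℂ b ∩ U).Nonempty := by
  obtain ⟨r, hr, hball⟩ :=
    nhds_basis_closedBall.eventually_iff.1 ((eventually_nhdsWithin_iff.1 isolated).and hU)
  have hsphere : sphere α r ⊆ resolventSet ℂ a := fun z hz ↦
    not_not.1 ((hball (sphere_subset_closedBall hz)).1 (ne_of_mem_sphere hz hr.ne'))
  exact (eventually_nonempty_spectrum_inter_closedBall hα hr hsphere).mono fun b hb ↦
    hb.mono (Set.inter_subset_inter_right _ fun z hz ↦ (hball hz).2)

theorem eventually_encard_nzSpec_le {A : Type*} [NormedRing A] [NormedAlgebra ℂ A]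
    [CompleteSpace A] {a : A} (ha : (spectrum ℂ a).Finite) :
    ∀ᶠ b in 𝓝 a, (nzSpec a).encard ≤ (nzSpec b).encard := by
  obtain ⟨U, hU, disjoint⟩ := (ha.insert 0).t2_separation
  have meets : ∀ᶠ b in 𝓝 a, ∀ α ∈ nzSpec a, (spectrum ℂ b ∩ U α).Nonempty :=
    (Filter.eventually_all_finite ha.sdiff).2 fun α hα ↦
      eventually_nonempty_spectrum_inter hα.1 (nhdsNE_le_cofinite α ha.compl_mem_cofinite)
        ((hU α).2.mem_nhds (hU α).1)
  filter_upwards [meets] with b hb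
  choose! β hβ using hb
  refine Set.encard_le_encard_of_injOn (f := β) (fun α hα ↦ ⟨(hβ α hα).1, ?_⟩) ?_
  · rintro β_eq_zero
    have zero_mem : (0 : ℂ) ∈ U α := β_eq_zero ▸ (hβ α hα).2
    exact hα.2 (disjoint.elim_set (Or.inr hα.1) (Or.inl rfl) 0 zero_mem (hU 0).1)
  · intro α hα α' hα' β_eq
    exact disjoint.elim_set (Or.inr hα.1) (Or.inr hα'.1) (β α) (hβ α hα).2
      (β_eq ▸ (hβ α' hα').2)

theorem isOpen_setOf_mem_resolventSet {𝕜 A : Type*} [NormedField 𝕜] [NormedRing A]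
    [NormedAlgebra 𝕜 A] [HasSummableGeomSeries A] :
    IsOpen {p : A × 𝕜 | p.2 ∈ resolventSet 𝕜 p.1} :=
  Units.isOpen.preimage
    (show Continuous fun p : A × 𝕜 ↦ algebraMap 𝕜 A p.2 - p.1 by fun_prop)

theorem nzSpec_subset_of_mem_closure {A : Type*} [NormedRing A] [NormedAlgebra ℂ A]
    [CompleteSpace A] {a b : A} (ha : (spectrum ℂ a).Finite)
    (h : (a, b) ∈ closure {p : A × A | nzSpec p.1 ⊆ nzSpec p.2}) : nzSpec a ⊆ nzSpec b := by
  rintro α ⟨hα, α_ne⟩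
  refine ⟨fun hαb ↦ ?_, α_ne⟩
  obtain ⟨V, hV, U, hU, resolvent_on⟩ :=
    mem_nhds_prod_iff.1 (isOpen_setOf_mem_resolventSet.mem_nhds (show (b, α) ∈ _ from hαb))
  have meets : ∀ᶠ x in 𝓝 a, (spectrum ℂ x ∩ (U ∩ {0}ᶜ)).Nonempty :=
    eventually_nonempty_spectrum_inter hα (nhdsNE_le_cofinite α ha.compl_mem_cofinite)
      (inter_mem hU (isOpen_compl_singleton.mem_nhds α_ne))
  obtain ⟨⟨x, y⟩, hxy, ⟨β, hβx, hβU, β_ne⟩, hyV⟩ :=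
    ((mem_closure_iff_frequently.1 h).and_eventually
      ((meets.prod_nhds (show ∀ᶠ y in 𝓝 b, y ∈ V from hV)))).exists
  exact (hxy ⟨hβx, β_ne⟩).1 (resolvent_on (Set.mk_mem_prod hyV hβU))

end Resolvent

section Density

universe u v w

variable {A : Type*} [NormedRing A] [NormedAlgebra ℂ A] [CompleteSpace A]

theorem mkPiAlgebra_compContinuousLinearMap_ne_zero {𝕜 V ι : Type*} [NontriviallyNormedField 𝕜]
    [NormedAddCommGroup V] [NormedSpace 𝕜 V] [Fintype ι] {φ : ι → V →L[𝕜] 𝕜}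
    (hφ : ∀ i, φ i ≠ 0) :
    (ContinuousMultilinearMap.mkPiAlgebra 𝕜 ι 𝕜).compContinuousLinearMap φ ≠ 0 := by
  choose m hm using fun i ↦ DFunLike.ne_iff.1 (hφ i)
  refine DFunLike.ne_iff.2 ⟨m, ?_⟩
  simpa [Finset.prod_eq_zero_iff] using hm

theorem dense_setOf_exists_lift_freeAlgebra_ne_zero_of_commute [NormOneClass A] {ι : Type*}
    {T : ι → ℂ → A} (hT : ∀ i, Differentiable ℂ (T i))
    (T_comm : ∀ z i j, Commute (T i z) (T j z)) {P : FreeAlgebra ℂ ι} {z₀ α : ℂ}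
    (hα : α ∈ spectrum ℂ (FreeAlgebra.lift ℂ (fun i ↦ T i z₀) P)) (α_ne : α ≠ 0) :
    Dense {z | ∃ ν : ι → ℂ, (∀ i, ν i ∈ spectrum ℂ (T i z)) ∧ FreeAlgebra.lift ℂ ν P ≠ 0} := by
  intro c
  by_contra hc
  rw [mem_closure_iff_frequently, not_frequently] at hc
  have quasinilpotent_near :
      ∀ᶠ z in 𝓝 c, spectralRadius ℂ (FreeAlgebra.lift ℂ (fun i ↦ T i z) P) = 0 := by
    filter_upwards [hc] with z hz
    refine spectralRadius_eq_zero_iff.2 fun β hβ ↦ ?_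
    obtain ⟨ν, hν, rfl⟩ := exists_lift_freeAlgebra_eq_of_mem_spectrum (T_comm z) hβ
    by_contra ne_zero
    exact hz ⟨ν, hν, ne_zero⟩
  have quasinilpotent := spectralRadius_eq_zero_of_eventually
    (differentiable_lift_freeAlgebra hT P) quasinilpotent_near z₀
  exact α_ne (spectralRadius_eq_zero_iff.1 quasinilpotent α hα)

theorem exists_commuting_model {𝕜 : Type w} {A : Type u} {ι : Type v} [RCLike 𝕜] [NormedRing A]
    [NormedAlgebra 𝕜 A] [CompleteSpace A] [Finite ι] {a : ι → A} {μ : ι → 𝕜}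
    (hμ : ∀ i, μ i ∈ spectrum 𝕜 (a i)) :
    ∃ (B : Type (max u v w)) (_ : NormedRing B) (_ : NormOneClass B) (_ : NormedAlgebra 𝕜 B)
      (_ : CompleteSpace B) (R : ι → A →L[𝕜] B),
      (∀ i j, i ≠ j → ∀ x y, Commute (R i x) (R j y)) ∧
      (∀ i x, spectrum 𝕜 (R i x) ⊆ spectrum 𝕜 x) ∧
      ∀ P, FreeAlgebra.lift 𝕜 μ P ∈ spectrum 𝕜 (FreeAlgebra.lift 𝕜 (fun i ↦ R i (a i)) P) := by
  classical
  have := Fintype.ofFinite ι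
  choose S spectrum_S φ φ_ne_zero eigen using fun i ↦ exists_dual_eigenvector_of_mem_spectrum (hμ i)
  -- The product of the `φ i` in separate variables is a joint eigenvector.
  have product_ne_zero := mkPiAlgebra_compContinuousLinearMap_ne_zero φ_ne_zero
  have := nontrivial_of_ne _ _ product_ne_zero
  let V := ContinuousMultilinearMap 𝕜 (fun _ : ι ↦ A) 𝕜
  refine ⟨V →L[𝕜] V, inferInstance, inferInstance, inferInstance, inferInstance,
    fun i ↦ precompAt 𝕜 A 𝕜 i ∘L S i, fun i j hij x y ↦ commute_precompAt hij _ _,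
    fun i x ↦ (spectrum_precompAt_subset i (S i x)).trans (spectrum_S i x), fun P ↦ ?_⟩
  exact mem_spectrum_of_apply_eq_smul product_ne_zero <|
    lift_freeAlgebra_apply_eq_smul (fun i ↦ precompAt_mkPiAlgebra_comp (eigen i)) P

theorem dense_setOf_exists_lift_freeAlgebra_ne_zero {ι : Type*} [Finite ι] {f : ι → ℂ → A}
    (hf : ∀ i, Differentiable ℂ (f i)) {P : FreeAlgebra ℂ ι} {z₀ : ℂ} {μ : ι → ℂ}
    (hμ : ∀ i, μ i ∈ spectrum ℂ (f i z₀)) (hP : FreeAlgebra.lift ℂ μ P ≠ 0) :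
    Dense {z | ∃ ν : ι → ℂ, (∀ i, ν i ∈ spectrum ℂ (f i z)) ∧ FreeAlgebra.lift ℂ ν P ≠ 0} := by
  obtain ⟨B, _, _, _, _, R, R_comm, spectrum_R, mem_spectrum⟩ := exists_commuting_model hμ
  have R_diff (i : ι) : Differentiable ℂ fun z ↦ R i (f i z) := (R i).differentiable.comp (hf i)
  have commute (z : ℂ) (i j : ι) : Commute (R i (f i z)) (R j (f j z)) := by
    obtain rfl | hij := eq_or_ne i j
    · exact Commute.refl _
    · exact R_comm i j hij _ _
  refine (dense_setOf_exists_lift_freeAlgebra_ne_zero_of_commute R_diff commute (mem_spectrum P)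
    hP).mono ?_
  rintro z ⟨ν, hν, ne_zero⟩
  exact ⟨ν, fun i ↦ spectrum_R i _ (hν i), ne_zero⟩

theorem dense_setOf_exists_injective_mem_nzSpec {ι : Type*} [Finite ι] {f : ι → ℂ → A}
    (hf : ∀ i, Differentiable ℂ (f i)) {z₀ : ℂ} {μ : ι → ℂ} (μ_inj : Function.Injective μ)
    (hμ : ∀ i, μ i ∈ nzSpec (f i z₀)) :
    Dense {z | ∃ ν : ι → ℂ, Function.Injective ν ∧ ∀ i, ν i ∈ nzSpec (f i z)} := by
  obtain ⟨P, hP⟩ := exists_lift_freeAlgebra_ne_zero_iff ℂ ι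
  refine (dense_setOf_exists_lift_freeAlgebra_ne_zero hf (fun i ↦ (hμ i).1)
    ((hP μ).2 ⟨μ_inj, fun i ↦ (hμ i).2⟩)).mono ?_
  rintro z ⟨ν, hν, ne_zero⟩
  obtain ⟨ν_inj, ν_ne_zero⟩ := (hP ν).1 ne_zero
  exact ⟨ν, ν_inj, fun i ↦ ⟨hν i, ν_ne_zero i⟩⟩

theorem dense_setOf_le_encard_nzSpec {f : ℂ → A} (hf : Differentiable ℂ f) {k : ℕ} {z₀ : ℂ}
    (hk : k ≤ (nzSpec (f z₀)).encard) : Dense {z | k ≤ (nzSpec (f z)).encard} := by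
  obtain ⟨s, hs, hcard⟩ := Set.exists_subset_encard_eq hk
  have : Finite s := (Set.finite_of_encard_eq_coe hcard).to_subtype
  refine (dense_setOf_exists_injective_mem_nzSpec (f := fun _ : s ↦ f) (fun _ ↦ hf)
    Subtype.val_injective (fun i ↦ hs i.2)).mono ?_
  rintro z ⟨ν, ν_inj, hν⟩
  calc (k : ℕ∞) = ENat.card s := by rw [ENat.card_coe_set_eq, hcard]
    _ ≤ (Set.range ν).encard := ν_inj.encard_range
    _ ≤ (nzSpec (f z)).encard := Set.encard_le_encard (Set.range_subset_iff.2 hν)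

end Density

section EntireFamilies

variable {A : Type*} [NormedRing A] [NormedAlgebra ℂ A] [CompleteSpace A]

theorem encard_nzSpec_le_of_forall_mem_isOpen {f : ℂ → A} (hf : Differentiable ℂ f) {U : Set ℂ}
    (hU : IsOpen U) (hne : U.Nonempty) {k : ℕ} (h : ∀ z ∈ U, (nzSpec (f z)).encard ≤ k) (z : ℂ) :
    (nzSpec (f z)).encard ≤ k := by
  by_contra! hz
  obtain ⟨w, hw, hwU⟩ := (dense_setOf_le_encard_nzSpec hf (k := k + 1)
    (mod_cast Order.add_one_le_of_lt hz)).inter_open_nonempty U hU hne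
  exact (h w hw).not_gt ((ENat.add_one_le_iff (ENat.natCast_ne_top k)).1 (mod_cast hwU))

theorem exists_forall_encard_nzSpec_le {g : ℂ → A} (hg : Differentiable ℂ g) {U : Set ℂ}
    (hU : IsOpen U) (hne : U.Nonempty) (hfin : ∀ z ∈ U, (spectrum ℂ (g z)).Finite) :
    ∃ k : ℕ, ∀ z, (nzSpec (g z)).encard ≤ k := by
  by_contra! unbounded
  have := hU.baireSpace
  have := hne.to_subtype
  let D (k : ℕ) : Set U := {z | k ≤ (nzSpec (g z)).encard}
  have D_open (k : ℕ) : IsOpen (D k) := by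
    refine isOpen_iff_mem_nhds.2 fun z hz ↦ ?_
    have semicontinuous := (hg.continuous.comp continuous_subtype_val).continuousAt.eventually
      (eventually_encard_nzSpec_le (hfin z z.2))
    exact semicontinuous.mono fun w hw ↦ hz.trans hw
  have D_dense (k : ℕ) : Dense (D k) := by
    obtain ⟨z, hz⟩ := unbounded k
    exact (dense_setOf_le_encard_nzSpec hg hz.le).preimage hU.isOpenMap_subtype_val
  obtain ⟨z, hz⟩ := (dense_iInter_of_isOpen D_open D_dense).nonempty
  exact ((hfin z z.2).sdiff (t := {0})).encard_lt_top.ne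
    (ENat.eq_top_iff_forall_ge.2 fun k ↦ Set.mem_iInter.1 hz k)

theorem dense_setOf_forall_encard_nzSpec_le {g : ℂ → A} (hg : Differentiable ℂ g) {k : ℕ}
    (hk : ∀ z, (nzSpec (g z)).encard ≤ k) :
    Dense {z | ∀ w, (nzSpec (g w)).encard ≤ (nzSpec (g z)).encard} := by
  have bounded : ⨆ z, (nzSpec (g z)).encard < ⊤ := (iSup_le hk).trans_lt (ENat.natCast_lt_top k)
  obtain ⟨z₀, hz₀⟩ := ENat.exists_eq_iSup_of_lt_top bounded
  obtain ⟨m, hm⟩ := ENat.ne_top_iff_exists.1 bounded.ne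
  refine (dense_setOf_le_encard_nzSpec hg (hm.trans hz₀.symm).le).mono fun z hz w ↦ ?_
  exact (le_iSup (fun w ↦ (nzSpec (g w)).encard) w).trans (hm.symm.le.trans hz)

theorem nzSpec_subset_of_forall_encard_le {f g : ℂ → A} (hf : Differentiable ℂ f)
    (hg : Differentiable ℂ g) {U : Set ℂ} (hU : IsOpen U) (hne : U.Nonempty)
    (hsub : ∀ z ∈ U, nzSpec (f z) ⊆ nzSpec (g z)) {z₀ : ℂ} (hfin : (nzSpec (g z₀)).Finite)
    (hmax : ∀ z, (nzSpec (g z)).encard ≤ (nzSpec (g z₀)).encard) :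
    nzSpec (f z₀) ⊆ nzSpec (g z₀) := by
  intro α hα
  by_contra hαg
  have : Finite ↑(insert α (nzSpec (g z₀))) := (hfin.insert α).to_subtype
  let h (i : ↑(insert α (nzSpec (g z₀)))) : ℂ → A := if i = α then f else g
  have h_diff (i) : Differentiable ℂ (h i) := by
    dsimp only [h]; split_ifs <;> assumption
  have mem_h (i) : i.1 ∈ nzSpec (h i z₀) := by
    dsimp only [h]; split_ifs with hi
    · rwa [hi]
    · exact i.2.resolve_left hi
  obtain ⟨z, hzU, ν, ν_inj, hν⟩ := (dense_setOf_exists_injective_mem_nzSpec h_diff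
    Subtype.val_injective mem_h).inter_open_nonempty U hU hne
  have nzSpec_h_subset (i) : nzSpec (h i z) ⊆ nzSpec (g z) := by
    dsimp only [h]; split_ifs
    exacts [hsub z hzU, subset_rfl]
  have too_many : (nzSpec (g z₀)).encard + 1 ≤ (nzSpec (g z₀)).encard := calc
    _ = (insert α (nzSpec (g z₀))).encard := (Set.encard_insert_of_notMem hαg).symm
    _ ≤ (Set.range ν).encard := ν_inj.encard_range
    _ ≤ (nzSpec (g z)).encard :=
      Set.encard_le_encard (Set.range_subset_iff.2 fun i ↦ nzSpec_h_subset i (hν i))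
    _ ≤ (nzSpec (g z₀)).encard := hmax z
  exact too_many.not_gt ((ENat.lt_add_one_iff hfin.encard_lt_top.ne).2 le_rfl)

theorem nzSpec_subset_of_subset_on_isOpen {f g : ℂ → A} (hf : Differentiable ℂ f)
    (hg : Differentiable ℂ g) {U : Set ℂ} (hU : IsOpen U) (hne : U.Nonempty)
    (hfin : ∀ z ∈ U, (spectrum ℂ (g z)).Finite)
    (hsub : ∀ z ∈ U, nzSpec (f z) ⊆ nzSpec (g z)) (z : ℂ) : nzSpec (f z) ⊆ nzSpec (g z) := by
  obtain ⟨k, hk⟩ := exists_forall_encard_nzSpec_le hg hU hne hfin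
  have hkf : (nzSpec (f z)).encard ≤ k := encard_nzSpec_le_of_forall_mem_isOpen hf hU hne
    (fun w hw ↦ (Set.encard_le_encard (hsub w hw)).trans (hk w)) z
  have f_fin : (spectrum ℂ (f z)).Finite :=
    (Set.finite_of_encard_le_coe hkf).of_sdiff (Set.finite_singleton 0)
  refine nzSpec_subset_of_mem_closure f_fin <| map_mem_closure
    (f := fun w ↦ (f w, g w)) (hf.continuous.prodMk hg.continuous)
    (dense_setOf_forall_encard_nzSpec_le hg hk z) fun w hw ↦ ?_
  exact nzSpec_subset_of_forall_encard_le hf hg hU hne hsub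
    (Set.finite_of_encard_le_coe (hk w)) hw

end EntireFamilies

theorem nzSpec_subset_all_of_subset_on_open_general {E A : Type*} [NormedAddCommGroup E]
    [NormedSpace ℂ E] [NormedRing A] [NormedAlgebra ℂ A] [CompleteSpace A] {f g : E → A}
    (hf : Differentiable ℂ f) (hg : Differentiable ℂ g) {N : Set E} (hN : IsOpen N)
    (hNne : N.Nonempty) (hfin : ∀ x ∈ N, (spectrum ℂ (g x)).Finite)
    (hsub : ∀ x ∈ N, nzSpec (f x) ⊆ nzSpec (g x)) (x : E) : nzSpec (f x) ⊆ nzSpec (g x) := by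
  obtain ⟨x₀, hx₀⟩ := hNne
  let line (z : ℂ) : E := x₀ + z • (x - x₀)
  have line_diff : Differentiable ℂ line := by fun_prop
  have line_zero : line 0 = x₀ := by simp [line]
  have line_one : line 1 = x := by simp [line]
  simpa [line_one] using nzSpec_subset_of_subset_on_isOpen (hf.comp line_diff) (hg.comp line_diff)
    (hN.preimage line_diff.continuous) ⟨0, by simpa [line_zero]⟩ (fun z hz ↦ hfin _ hz)
    (fun z hz ↦ hsub _ hz) 1

theorem nzSpec_subset_all_of_subset_on_open
    {A : Type*} [NormedRing A] [NormOneClass A] [NormedAlgebra ℂ A] [CompleteSpace A]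
    (hss : JacobsonSemisimple A) (N : Set A) (hN : IsOpen N) (hNne : N.Nonempty)
    (a b : A)
    (hfin : ∀ x ∈ N, (spectrum ℂ (b * x)).Finite)
    (hsub : ∀ x ∈ N, nzSpec (a * x) ⊆ nzSpec (b * x)) :
    ∀ x : A, nzSpec (a * x) ⊆ nzSpec (b * x) :=
  nzSpec_subset_all_of_subset_on_open_general (differentiable_id.const_mul a)
    (differentiable_id.const_mul b) hN hNne hfin hsub
end
end
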